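/- Let h ∈ ℤ_{≥0} and let (b_a)_{a∈A_h} be a family of elements of E. Then sup_{a∈A_h} |b_a| ≤ ‖Σ_{a∈A_h} b_a·e_{a,0,r}‖_{C^r} · q^r, where 0 denotes the zero multi-index. -/

import Mathlib

/-!
Setting (cf. the paper's notations): `O` plays the role of the ring of integers `𝒪_F` of a
finite extension `F` of `ℚ_p`, `E` is the coefficient field (a finite extension of `ℚ_p`
with its p-adic absolute value, normalized by `|x| = p^{-val_F(x)}`, `val_F(p) = [F:ℚ_p]`),
`S` is the (finite) set of `ℚ_p`-algebra embeddings `F ↪ E`, restricted here to `O`,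
`ν : O → ℝ` is the absolute value on `O` (the common restriction of the norm of `E` along any
embedding), `ϖ` is a fixed uniformizer with `ν ϖ = q⁻¹` where `q = p^f` is the cardinality
of the residue field, and `u * ϖ ^ e = p` records the ramification index `e`.
-/

open scoped Classical

noncomputable section

namespace CrPaper

structure Setting (S O E : Type*) [Fintype S] [CommRing O] [NormedField E] where
  q : ℝ
  p : ℕ
  fdeg : ℕ
  hp : p.Prime
  hfdeg : 0 < fdeg
  hq : q = (p : ℝ) ^ fdeg
  emb : S → O →+* E
  emb_inj : ∀ s, Function.Injective (emb s)
  emb_distinct : Function.Injective emb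
  ν : O → ℝ
  norm_emb : ∀ (s) (z : O), ‖emb s z‖ = ν z
  norm_le_one : ∀ (s) (z : O), ‖emb s z‖ ≤ 1
  norm_add_max : ∀ x y : E, ‖x + y‖ ≤ max ‖x‖ ‖y‖
  ϖ : O
  ν_ϖ : ν ϖ = q⁻¹
  mem_ball_iff : ∀ (y : O) (n : ℕ), (∃ z, y = ϖ ^ n * z) ↔ ν y ≤ q⁻¹ ^ n
  ram : ∃ (e : ℕ) (u : O), 0 < e ∧ IsUnit u ∧ u * ϖ ^ e = (p : O)

variable {S O E : Type*} [Fintype S] [DecidableEq S] [CommRing O] [IsDomain O]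
  [NormedField E] [CompleteSpace E] [CharZero E]

/-- The total weight `|i| = ∑ i_σ` of a multi-index. -/
def wt (i : S → ℕ) : ℕ := ∑ s, i s

/-- `i! = ∏ i_σ!` for a multi-index. -/
def mfact (i : S → ℕ) : ℕ := ∏ s, (i s).factorial

/-- The (finite) set `I_{≤N}` of multi-indices of total weight `≤ N`. -/
def Idx (S : Type*) [Fintype S] [DecidableEq S] (N : ℕ) : Finset (S → ℕ) :=
  (Fintype.piFinset fun _ : S => Finset.range (N + 1)).filter fun i => wt i ≤ N

/-- `z^i = ∏_σ σ(z)^{i_σ}`. -/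
def mpow (St : Setting S O E) (z : O) (i : S → ℕ) : E := ∏ s, St.emb s z ^ i s

/-- The Taylor remainder `ε_{f,N}(x,y) = f(x+y) − ∑_{|i|≤N} D_i f(x) y^i / i!`. -/
def epsTay (St : Setting S O E) (N : ℕ) (f : O → E) (D : (S → ℕ) → O → E) (x y : O) : E :=
  f (x + y) - ∑ i ∈ Idx S N, D i x * mpow St y i / (mfact i : E)

/-- `f` is of class `C^r` with the family of bounded functions `D` witnessing the
definition: all `D_i` (`|i| ≤ ⌊r⌋`) are bounded and
`C_{f,r}(h) = sup_{x ∈ O, y ∈ ϖ^h O} |ε_{f,⌊r⌋}(x,y)| q^{rh} → 0` as `h → ∞`. -/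
def IsCrWith (St : Setting S O E) (r : ℝ) (f : O → E) (D : (S → ℕ) → O → E) : Prop :=
  (∀ i ∈ Idx S ⌊r⌋₊, ∃ C : ℝ, ∀ x : O, ‖D i x‖ ≤ C) ∧
  ∀ ε : ℝ, 0 < ε → ∃ M : ℕ, ∀ h : ℕ, M ≤ h → ∀ x z : O,
    ‖epsTay St ⌊r⌋₊ f D x (St.ϖ ^ h * z)‖ * St.q ^ (r * (h : ℝ)) ≤ ε

/-- `f` is of class `C^r`. -/
def IsCr (St : Setting S O E) (r : ℝ) (f : O → E) : Prop :=
  ∃ D, IsCrWith St r f D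

/-- The `C^r`-norm of `f` (relative to the — unique — family `D`):
`max( sup_{i,x} |D_i f(x)/i!| , sup_{x,y} |ε_{f,⌊r⌋}(x,y)|/|y|^r )`. -/
def CrNorm (St : Setting S O E) (r : ℝ) (f : O → E) (D : (S → ℕ) → O → E) : ℝ :=
  max (⨆ i : (Idx S ⌊r⌋₊), ⨆ x : O, ‖D i.1 x / (mfact i.1 : E)‖)
      (⨆ x : O, ⨆ y : O, ‖epsTay St ⌊r⌋₊ f D x y‖ / St.ν y ^ r)

/-- A compatible system of representatives `A_h` of `O/ϖ^h O` with `A_0 = {0}` and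
`A_h ⊆ A_{h+1}`. -/
structure RepSystem (St : Setting S O E) where
  A : ℕ → Finset O
  hA0 : A 0 = {0}
  hmono : ∀ h : ℕ, A h ⊆ A (h + 1)
  hrep : ∀ (h : ℕ) (z : O), ∃! a : O, a ∈ A h ∧ ∃ y : O, z = a + St.ϖ ^ h * y

/-- `A = ⋃_h A_h`. -/
def Aall (St : Setting S O E) (R : RepSystem St) : Set O := ⋃ h : ℕ, (R.A h : Set O)

/-- `l(a)`: the smallest `n` with `a ∈ A_n`. -/
def lA (St : Setting S O E) (R : RepSystem St) (a : O) : ℕ := sInf {n : ℕ | a ∈ R.A n}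

/-- The function `z ↦ 1_{a+ϖ^n O}(z) ((z−a)/ϖ^n)^i` : it takes the value `y^i` at
`z = a + ϖ^n y` and `0` outside the coset `a + ϖ^n O`. -/
def coeval (St : Setting S O E) (a : O) (n : ℕ) (i : S → ℕ) : O → E := fun z =>
  if hz : ∃ y : O, z = a + St.ϖ ^ n * y then mpow St hz.choose i else 0

/-- The function `e_{a,i,r}(z) = ρ(ϖ)^{[l(a)r]} 1_{a+ϖ^{l(a)}O}(z) ((z−a)/ϖ^{l(a)})^i`. -/
def ebasis (St : Setting S O E) (R : RepSystem St) (ρ : O →+* E) (r : ℝ) (a : O)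
    (i : S → ℕ) : O → E := fun z =>
  ρ St.ϖ ^ ⌊(lA St R a : ℝ) * r⌋₊ * coeval St a (lA St R a) i z

theorem aux_seq {ι : Type*} (t : ℝ) (ht : 0 < t) (s : Finset ι) (lam : ι → E)
    (hl : ∀ i ∈ s, t ≤ ‖lam i‖) :
    ∀ c : ι → E, Filter.Tendsto (fun k : ℕ => ‖∑ i ∈ s, c i * lam i ^ k‖ / t ^ k) Filter.atTop
      (nhds 0) → ∀ k : ℕ, ∑ i ∈ s, c i * lam i ^ k = 0 := by
  induction s using Finset.induction_on with
  | empty => intro c _ k; simp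
  | insert j s hj ih =>
    intro c hc
    set u : ℕ → E := fun k => ∑ i ∈ insert j s, c i * lam i ^ k with hu
    have hv : ∀ k, u (k + 1) - lam j * u k = ∑ i ∈ s, (c i * (lam i - lam j)) * lam i ^ k := by
      intro k
      simp only [hu, Finset.mul_sum]
      rw [← Finset.sum_sub_distrib, Finset.sum_insert hj]
      have : c j * lam j ^ (k + 1) - lam j * (c j * lam j ^ k) = 0 := by ring
      rw [this, zero_add]
      exact Finset.sum_congr rfl fun i _ => by ring
    have hv0 : ∀ k, u (k + 1) - lam j * u k = 0 := by
      intro k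
      rw [hv]
      refine ih (fun i hi => hl i (Finset.mem_insert_of_mem hi)) _ ?_ k
      have h1 : Filter.Tendsto (fun k : ℕ => t * (‖u (k + 1)‖ / t ^ (k + 1))
          + ‖lam j‖ * (‖u k‖ / t ^ k)) Filter.atTop (nhds 0) := by
        have h2 := ((Filter.tendsto_add_atTop_iff_nat 1).2 hc).const_mul t
        have h3 := hc.const_mul ‖lam j‖
        simpa using h2.add h3
      refine squeeze_zero (fun k => by positivity) (fun k => ?_) h1
      rw [← hv]
      have h4 : t * (‖u (k + 1)‖ / t ^ (k + 1)) = ‖u (k + 1)‖ / t ^ k := by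
        field_simp
        ring
      rw [h4, ← mul_div_assoc, ← add_div]
      gcongr
      calc _ ≤ _ := norm_sub_le _ _
        _ = _ := by rw [norm_mul]
    have hp : ∀ k, u k = lam j ^ k * u 0 := by
      intro k
      induction k with
      | zero => simp
      | succ k ihk =>
        rw [sub_eq_zero.1 (hv0 k), ihk]; ring
    have hu0 : ‖u 0‖ ≤ 0 := by
      refine ge_of_tendsto' hc fun k => ?_
      change ‖u 0‖ ≤ ‖u k‖ / t ^ k
      rw [le_div_iff₀ (by positivity), hp k, norm_mul, norm_pow, mul_comm]
      have := hl j (Finset.mem_insert_self _ _)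
      gcongr
    have hu0' : u 0 = 0 := norm_le_zero_iff.1 hu0
    intro k
    change u k = 0
    rw [hp, hu0', mul_zero]

theorem Setting.one_lt_q (St : Setting S O E) : 1 < St.q := by
  rw [St.hq]
  exact one_lt_pow₀ (by exact_mod_cast St.hp.one_lt) St.hfdeg.ne'

theorem mpow_zero_idx (St : Setting S O E) (z : O) : mpow St z 0 = 1 := by simp [mpow]

theorem mpow_zero_arg (St : Setting S O E) (i : S → ℕ) (hi : i ≠ 0) : mpow St 0 i = 0 := by
  obtain ⟨s, hs⟩ := Function.ne_iff.1 hi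
  exact Finset.prod_eq_zero (Finset.mem_univ s) (by simpa using hs)

theorem mpow_mul (St : Setting S O E) (y z : O) (i : S → ℕ) :
    mpow St (y * z) i = mpow St y i * mpow St z i := by
  simp [mpow, mul_pow, Finset.prod_mul_distrib]

theorem mpow_pow (St : Setting S O E) (y : O) (k : ℕ) (i : S → ℕ) :
    mpow St (y ^ k) i = mpow St y i ^ k := by
  simp only [mpow, map_pow, ← Finset.prod_pow]
  exact Finset.prod_congr rfl fun s _ => by rw [← pow_mul, ← pow_mul, mul_comm]

theorem norm_mpow_pi (St : Setting S O E) (i : S → ℕ) :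
    ‖mpow St St.ϖ i‖ = (St.q⁻¹) ^ wt i := by
  simp only [mpow, norm_prod, norm_pow, St.norm_emb, St.ν_ϖ, wt, Finset.prod_pow_eq_pow_sum]

theorem zero_mem_Idx (N : ℕ) : (0 : S → ℕ) ∈ Idx S N := by
  rw [Idx, Finset.mem_filter]
  constructor
  · simp
  · simp [wt]

theorem wt_le {N : ℕ} {i : S → ℕ} (hi : i ∈ Idx S N) : wt i ≤ N := by
  simp only [Idx, Finset.mem_filter] at hi
  exact hi.2

theorem D_zero (St : Setting S O E) {r : ℝ} (hr : 0 ≤ r) {f : O → E} {D : (S → ℕ) → O → E}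
    (hD : IsCrWith St r f D) (x : O) : D 0 x = f x := by
  have hq := St.one_lt_q
  have h0 : epsTay St ⌊r⌋₊ f D x 0 = f x - D 0 x := by
    rw [epsTay, add_zero, Finset.sum_eq_single (0 : S → ℕ)]
    · simp [mpow_zero_idx, mfact]
    · intro i _ hi
      simp [mpow_zero_arg St i hi]
    · intro hn; exact absurd (zero_mem_Idx _) hn
  have : ‖f x - D 0 x‖ ≤ 0 := by
    refine le_of_forall_pos_le_add fun ε hε => ?_
    obtain ⟨M, hM⟩ := hD.2 ε hε
    have := hM M le_rfl x 0
    rw [mul_zero, h0] at this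
    have h1 : 1 ≤ St.q ^ (r * (M : ℝ)) := Real.one_le_rpow hq.le (by positivity)
    nlinarith [norm_nonneg (f x - D 0 x)]
  exact (sub_eq_zero.1 (norm_le_zero_iff.1 this)).symm

theorem epsTay_eq (St : Setting S O E) {r : ℝ} (hr : 0 ≤ r) {f : O → E} {D : (S → ℕ) → O → E}
    (hD : IsCrWith St r f D) (h : ℕ) (hf : ∀ k, h ≤ k → ∀ x z, f (x + St.ϖ ^ k * z) = f x)
    (x y : O) : epsTay St ⌊r⌋₊ f D x y = f (x + y) - f x := by
  have hq := St.one_lt_q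
  have hq0 : 0 < St.q := by linarith
  set s := (Idx S ⌊r⌋₊).erase 0 with hs
  have key : ∀ z, epsTay St ⌊r⌋₊ f D x z = f (x + z) - f x
      - ∑ i ∈ s, D i x * mpow St z i / (mfact i : E) := by
    intro z
    rw [epsTay, ← Finset.add_sum_erase _ _ (zero_mem_Idx (S := S) ⌊r⌋₊), D_zero St hr hD,
      mpow_zero_idx]
    simp [mfact, hs, sub_sub]
  have hu : ∀ k : ℕ, ∑ i ∈ s, D i x * mpow St (St.ϖ ^ k * y) i / (mfact i : E)
      = ∑ i ∈ s, (D i x * mpow St y i / (mfact i : E)) * mpow St St.ϖ i ^ k := by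
    intro k
    refine Finset.sum_congr rfl fun i _ => ?_
    rw [mpow_mul, mpow_pow]; ring
  have hz := aux_seq (St.q ^ (-r)) (by positivity) s (fun i => mpow St St.ϖ i) ?_
    (fun i => D i x * mpow St y i / (mfact i : E)) ?_ 0
  · rw [key y]
    simp only [pow_zero, mul_one] at hz
    rw [hz, sub_zero]
  · intro i hi
    rw [norm_mpow_pi, ← Real.rpow_natCast, Real.inv_rpow hq0.le, ← Real.rpow_neg hq0.le]
    apply Real.rpow_le_rpow_of_exponent_le hq.le
    have h1 := wt_le (Finset.mem_of_mem_erase hi)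
    have h2 := Nat.floor_le hr
    have h3 : (wt i : ℝ) ≤ (⌊r⌋₊ : ℝ) := by exact_mod_cast h1
    linarith
  · rw [Metric.tendsto_atTop]
    intro ε hε
    obtain ⟨M, hM⟩ := hD.2 (ε / 2) (by positivity)
    refine ⟨max M h, fun k hk => ?_⟩
    have h1 := hM k (le_trans (le_max_left _ _) hk) x y
    rw [key, hf k (le_trans (le_max_right _ _) hk), sub_self, zero_sub, norm_neg, hu] at h1
    have h2 : (St.q ^ (-r)) ^ k = (St.q ^ (r * (k : ℝ)))⁻¹ := by
      rw [← Real.rpow_natCast, ← Real.rpow_mul hq0.le, ← Real.rpow_neg hq0.le]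
      congr 1; ring
    rw [h2, div_inv_eq_mul, Real.dist_eq, sub_zero, abs_of_nonneg (by positivity)]
    linarith

theorem coeval_zero (St : Setting S O E) (a : O) (n : ℕ) (z : O) :
    coeval St a n 0 z = if ∃ y : O, z = a + St.ϖ ^ n * y then 1 else 0 := by
  unfold coeval
  split_ifs <;> simp [mpow_zero_idx]

theorem coset_shift (St : Setting S O E) (a z w : O) {n : ℕ} (hw : ∃ y, w = St.ϖ ^ n * y) :
    (∃ y : O, z + w = a + St.ϖ ^ n * y) ↔ ∃ y : O, z = a + St.ϖ ^ n * y := by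
  obtain ⟨v, rfl⟩ := hw
  constructor
  · rintro ⟨y, hy⟩
    exact ⟨y - v, by linear_combination hy⟩
  · rintro ⟨y, hy⟩
    exact ⟨y + v, by linear_combination hy⟩

theorem RepSystem.mono (St : Setting S O E) (R : RepSystem St) {m n : ℕ} (hmn : m ≤ n) :
    R.A m ⊆ R.A n :=
  monotone_nat_of_le_succ (f := R.A) R.hmono hmn

theorem lA_le (St : Setting S O E) (R : RepSystem St) {a : O} {n : ℕ} (ha : a ∈ R.A n) :
    lA St R a ≤ n := Nat.sInf_le ha

theorem mem_lA (St : Setting S O E) (R : RepSystem St) {a : O} {n : ℕ} (ha : a ∈ R.A n) :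
    a ∈ R.A (lA St R a) := Nat.sInf_mem (s := {n | a ∈ R.A n}) ⟨n, ha⟩

theorem rep_unique (St : Setting S O E) (R : RepSystem St) {a c : O} {n : ℕ} (ha : a ∈ R.A n)
    (hc : c ∈ R.A n) (h : ∃ y, a = c + St.ϖ ^ n * y) : a = c :=
  (R.hrep n a).unique ⟨ha, 0, by simp⟩ ⟨hc, h⟩

/-- `sup_{a ∈ A_h} |b_a| ≤ ‖∑_{a ∈ A_h} b_a e_{a,0,r}‖_{C^r} · q^r`. -/
theorem statement11 (St : Setting S O E) (R : RepSystem St) (ρ : O →+* E)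
    (hρ : ∀ z : O, ‖ρ z‖ = St.ν z) (r : ℝ) (hr : 0 ≤ r) (h : ℕ) (b : O → E)
    (D : (S → ℕ) → O → E)
    (hD : IsCrWith St r (fun z => ∑ a ∈ R.A h, b a * ebasis St R ρ r a 0 z) D) :
    ∀ a ∈ R.A h, ‖b a‖ ≤
      CrNorm St r (fun z => ∑ a ∈ R.A h, b a * ebasis St R ρ r a 0 z) D * St.q ^ r := by
  set f : O → E := fun z => ∑ a ∈ R.A h, b a * ebasis St R ρ r a 0 z with hf
  have hq := St.one_lt_q
  have hq0 : 0 < St.q := by linarith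
  have hloc : ∀ k, h ≤ k → ∀ x z, f (x + St.ϖ ^ k * z) = f x := by
    intro k hk x z
    refine Finset.sum_congr rfl fun c hc => ?_
    have hl := (lA_le St R hc).trans hk
    simp only [ebasis, coeval_zero]
    rw [if_congr (coset_shift St c x _ ⟨St.ϖ ^ (k - lA St R c) * z, by
      rw [← mul_assoc, ← pow_add, Nat.add_sub_cancel' hl]⟩) rfl rfl]
  have heps := epsTay_eq St hr hD h hloc
  have hD0 := D_zero St hr hD
  have hνn : ∀ y, 0 ≤ St.ν y := fun y => by rw [← hρ]; exact norm_nonneg _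
  obtain ⟨B, hB⟩ := hD.1 0 (zero_mem_Idx _)
  simp only [hD0] at hB
  -- boundedness of the two suprema
  have hbd : ∀ x y, ‖epsTay St ⌊r⌋₊ f D x y‖ / St.ν y ^ r ≤ 2 * B / (St.q⁻¹ ^ h) ^ r := by
    intro x y
    have hB0 : 0 ≤ B := (norm_nonneg _).trans (hB x)
    rw [heps]
    by_cases hy : St.ν y ≤ St.q⁻¹ ^ h
    · obtain ⟨z, rfl⟩ := (St.mem_ball_iff y h).2 hy
      rw [hloc h le_rfl, sub_self, norm_zero, zero_div]
      positivity
    · push Not at hy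
      have h1 : ‖f (x + y) - f x‖ ≤ 2 * B := by
        have := norm_sub_le (f (x + y)) (f x)
        linarith [hB (x + y), hB x]
      gcongr
  have hN2 : ∀ x y, ‖epsTay St ⌊r⌋₊ f D x y‖ / St.ν y ^ r ≤ CrNorm St r f D := by
    intro x y
    refine le_trans ?_ (le_max_right _ _)
    refine le_trans ?_ (le_ciSup (f := fun x => ⨆ y, ‖epsTay St ⌊r⌋₊ f D x y‖ / St.ν y ^ r)
      ⟨2 * B / (St.q⁻¹ ^ h) ^ r, ?_⟩ x)
    · exact le_ciSup (f := fun y => ‖epsTay St ⌊r⌋₊ f D x y‖ / St.ν y ^ r)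
        ⟨2 * B / (St.q⁻¹ ^ h) ^ r, by rintro _ ⟨y, rfl⟩; exact hbd x y⟩ y
    · rintro _ ⟨x, rfl⟩
      exact ciSup_le fun y => hbd x y
  have hN1 : ∀ x, ‖f x‖ ≤ CrNorm St r f D := by
    intro x
    refine le_trans ?_ (le_max_left _ _)
    refine le_trans ?_ (le_ciSup (f := fun i : (Idx S ⌊r⌋₊) =>
      ⨆ x : O, ‖D i.1 x / (mfact i.1 : E)‖) (Set.finite_range _).bddAbove ⟨0, zero_mem_Idx _⟩)
    refine le_trans ?_ (le_ciSup (f := fun x => ‖D 0 x / (mfact (0 : S → ℕ) : E)‖) ⟨B, ?_⟩ x)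
    · simp [mfact, hD0]
    · rintro _ ⟨x, rfl⟩
      simpa [mfact, hD0] using hB x
  have hNn : 0 ≤ CrNorm St r f D := (norm_nonneg _).trans (hN1 0)
  intro a ha
  rcases Nat.eq_zero_or_eq_succ_pred (lA St R a) with hl | hl
  · have ha0 : a ∈ R.A 0 := hl ▸ mem_lA St R ha
    have hval : f a = b a := by
      simp only [hf]
      rw [Finset.sum_eq_single a]
      · have : ∃ y, a = a + St.ϖ ^ 0 * y := ⟨0, by simp⟩
        simp [ebasis, coeval_zero, hl]
      · intro c hc hca
        simp only [ebasis, coeval_zero]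
        rw [if_neg, mul_zero, mul_zero]
        intro hex
        exact hca (rep_unique St R (RepSystem.mono St R (Nat.zero_le _) ha0)
          (mem_lA St R hc) hex).symm
      · intro hn; exact absurd ha hn
    have h1 := hN1 a
    rw [hval] at h1
    exact h1.trans (le_mul_of_one_le_right hNn (Real.one_le_rpow hq.le hr))
  · set n := (lA St R a).pred with hn
    have han : a ∈ R.A (n + 1) := by
      have := mem_lA St R ha
      rwa [hl] at this
    have hlt : ∀ m, a ∈ R.A m → n < m := fun m hm => by
      have := lA_le St R hm
      omega
    obtain ⟨a', ⟨ha', y, hy⟩, -⟩ := R.hrep n a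
    have hla' := lA_le St R ha'
    have hne : a ≠ a' := fun hh => absurd (hlt n (hh ▸ ha')) (lt_irrefl _)
    have hval : f (a' + St.ϖ ^ n * y) - f a' = b a * ρ St.ϖ ^ ⌊((n + 1 : ℕ) : ℝ) * r⌋₊ := by
      simp only [hf]
      rw [← Finset.sum_sub_distrib, Finset.sum_eq_single a]
      · simp only [ebasis, coeval_zero, hl]
        rw [← hy, if_pos ⟨0, by simp⟩, if_neg, mul_one, mul_zero, mul_zero, sub_zero]
        intro hex
        exact hne (rep_unique St R (RepSystem.mono St R (Nat.le_succ n) ha') han hex).symm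
      · intro c hc hca
        have hcm := mem_lA St R hc
        rw [sub_eq_zero]
        simp only [ebasis, coeval_zero]
        rcases le_or_gt (lA St R c) n with hcn | hcn
        · rw [if_congr (coset_shift St c a' _ ⟨St.ϖ ^ (n - lA St R c) * y, by
            rw [← mul_assoc, ← pow_add, Nat.add_sub_cancel' hcn]⟩) rfl rfl]
        · rw [if_neg, if_neg]
          · intro hex
            have := rep_unique St R (RepSystem.mono St R hcn.le ha') hcm hex
            rw [← this] at hcn
            omega
          · rw [← hy]
            intro hex
            exact hca (rep_unique St R (RepSystem.mono St R hcn han) hcm hex).symm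
      · intro hn; exact absurd ha hn
    have hνle : St.ν (St.ϖ ^ n * y) ≤ St.q⁻¹ ^ n := (St.mem_ball_iff _ n).1 ⟨y, rfl⟩
    have hνpos : 0 < St.ν (St.ϖ ^ n * y) := by
      by_contra hcon
      push Not at hcon
      obtain ⟨z, hz⟩ := (St.mem_ball_iff (St.ϖ ^ n * y) (n + 1)).2 (hcon.trans (by positivity))
      exact hne (rep_unique St R han (RepSystem.mono St R (Nat.le_succ n) ha')
        ⟨z, by rw [← hz]; exact hy⟩)
    have h1 := hN2 a' (St.ϖ ^ n * y)
    rw [heps, hval, div_le_iff₀ (by positivity), norm_mul, norm_pow, hρ, St.ν_ϖ] at h1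
    have h2 : St.ν (St.ϖ ^ n * y) ^ r ≤ St.q ^ (-(n * r)) := by
      calc _ ≤ (St.q⁻¹ ^ n) ^ r := by gcongr
        _ = _ := by
          rw [← Real.rpow_natCast, Real.inv_rpow hq0.le, ← Real.rpow_neg hq0.le,
            ← Real.rpow_mul hq0.le]
          congr 1; ring
    set m := ⌊((n + 1 : ℕ) : ℝ) * r⌋₊ with hm
    have hmle : (m : ℝ) ≤ ((n + 1 : ℕ) : ℝ) * r := Nat.floor_le (by positivity)
    have h3 : ‖b a‖ = ‖b a‖ * St.q⁻¹ ^ m * St.q ^ (m : ℝ) := by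
      rw [Real.rpow_natCast, mul_assoc, ← mul_pow, inv_mul_cancel₀ hq0.ne', one_pow, mul_one]
    rw [h3]
    calc _ ≤ CrNorm St r f D * St.q ^ (-(n * r)) * St.q ^ (m : ℝ) := by
          refine mul_le_mul_of_nonneg_right ?_ (by positivity)
          exact h1.trans (mul_le_mul_of_nonneg_left h2 hNn)
      _ = CrNorm St r f D * St.q ^ (-(n * r) + m) := by rw [mul_assoc, ← Real.rpow_add hq0]
      _ ≤ _ := by
        gcongr
        · exact hq.le
        · push_cast at hmle
          linarith

end CrPaper
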